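/- Let M ∈ ℕ*, let ρ, κ̂ : [0,∞) → [0,∞) be of class K∞, let λ ∈ (0,1), and let (v_i)_{i ∈ ℕ} be a sequence of nonnegative real numbers such that ρ(κ̂(v_{kM})) ≤ λ^k · ρ(κ̂(v_0)) for all k ∈ ℕ and v_{kM+j} ≤ κ̂(v_{kM}) for all k ∈ ℕ and j ∈ {0,…,M−1}. Then, with σ := ρ ∘ κ̂ ∘ ρ⁻¹ (a class-K∞ function), one has ρ(v_{kM+j}) ≤ λ^k · σ(ρ(v_0)) for all k ∈ ℕ, j ∈ {0,…,M−1}, and consequently Σ_{i=0}^{N−1} ρ(v_i) ≤ (M/(1−λ)) · σ(ρ(v_0)) for every N ∈ ℕ*. -/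

import Mathlib

open Filter Finset NNReal

noncomputable section

/-- A class-K function on `[0,∞)`: continuous, strictly increasing, zero at zero. -/
def ClassK (κ : ℝ≥0 → ℝ≥0) : Prop :=
  Continuous κ ∧ StrictMono κ ∧ κ 0 = 0

/-- A class-K∞ function: class K and unbounded. -/
def ClassKInf (κ : ℝ≥0 → ℝ≥0) : Prop :=
  ClassK κ ∧ Filter.Tendsto κ Filter.atTop Filter.atTop

/-!
Since `ρ⁻¹ (ρ (v 0)) = v 0`, the bound `σ (ρ (v 0))` is `ρ (κ̂ (v 0))`, so monotonicity of `ρ` turns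
the two hypotheses on `v` into the pointwise decay. For the sum, extend the range to `N` complete
blocks of length `M`: every term of the `k`-th block is at most `λ ^ k * σ (ρ (v 0))`, and the
geometric series `∑ λ ^ k` is bounded by `(1 - λ)⁻¹`.
-/

theorem ClassK.comp {g f : ℝ≥0 → ℝ≥0} (hg : ClassK g) (hf : ClassK f) : ClassK (g ∘ f) := by
  obtain ⟨hg_cont, hg_mono, hg_zero⟩ := hg
  obtain ⟨hf_cont, hf_mono, hf_zero⟩ := hf
  exact ⟨hg_cont.comp hf_cont, hg_mono.comp hf_mono, (congrArg g hf_zero).trans hg_zero⟩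

theorem ClassKInf.comp {g f : ℝ≥0 → ℝ≥0} (hg : ClassKInf g) (hf : ClassKInf f) :
    ClassKInf (g ∘ f) :=
  ⟨hg.1.comp hf.1, hg.2.comp hf.2⟩

theorem ClassKInf.strictMono {f : ℝ≥0 → ℝ≥0} (hf : ClassKInf f) : StrictMono f :=
  hf.1.2.1

theorem classKInf_orderIso (e : ℝ≥0 ≃o ℝ≥0) : ClassKInf e :=
  ⟨⟨e.continuous, e.strictMono, e.map_bot⟩, e.tendsto_atTop⟩

theorem classKInf_of_rightInverse {f g : ℝ≥0 → ℝ≥0} (hf : StrictMono f)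
    (hgf : Function.RightInverse g f) : ClassKInf g :=
  classKInf_orderIso (hf.orderIsoOfRightInverse f g hgf).symm

theorem sum_range_mul_le_nsmul_sum {N : Type*} [AddCommMonoid N] [Preorder N] [AddLeftMono N]
    {a b : ℕ → N} {m : ℕ} (hab : ∀ k j, j < m → a (k * m + j) ≤ b k) (n : ℕ) :
    ∑ i ∈ range (n * m), a i ≤ m • ∑ k ∈ range n, b k := by
  induction n with
  | zero => simp
  | succ n ih =>
    have last_block : ∑ j ∈ range m, a (n * m + j) ≤ m • b n := by
      simpa only [card_range] using
        sum_le_card_nsmul (range m) _ (b n) fun j hj ↦ hab n j (mem_range.mp hj)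
    rw [Nat.succ_mul, sum_range_add, sum_range_succ, nsmul_add]
    exact add_le_add ih last_block

section GeometricSum

variable {K : Type*} [Semifield K] [LinearOrder K] [IsStrictOrderedRing K]
  [CanonicallyOrderedAdd K] [Sub K] [OrderedSub K] {q : K}

theorem geom_sum_le_inv_one_sub (hq : q < 1) (n : ℕ) :
    ∑ k ∈ range n, q ^ k ≤ (1 - q)⁻¹ := by
  rw [geom_sum_of_lt_one hq, ← one_div]
  gcongr
  exact tsub_le_self

theorem sum_range_le_of_geometric_blocks {a : ℕ → K} {C : K} {m : ℕ} (hm : 0 < m) (hq : q < 1)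
    (ha : ∀ k j, j < m → a (k * m + j) ≤ q ^ k * C) (n : ℕ) :
    ∑ i ∈ range n, a i ≤ m / (1 - q) * C :=
  calc
    ∑ i ∈ range n, a i ≤ ∑ i ∈ range (n * m), a i :=
      sum_le_sum_of_subset (range_mono (Nat.le_mul_of_pos_right n hm))
    _ ≤ m • ∑ k ∈ range n, q ^ k * C := sum_range_mul_le_nsmul_sum ha n
    _ = m * (∑ k ∈ range n, q ^ k) * C := by rw [nsmul_eq_mul, ← sum_mul, mul_assoc]
    _ ≤ m * (1 - q)⁻¹ * C := by gcongr; exact geom_sum_le_inv_one_sub hq n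
    _ = m / (1 - q) * C := by rw [div_eq_mul_inv]

end GeometricSum

/-- the decay-transfer estimate for the rescaled running cost:
if `ρ(κ̂(v_{kM})) ≤ λ^k·ρ(κ̂(v_0))` and `v_{kM+j} ≤ κ̂(v_{kM})`, then with
`σ := ρ ∘ κ̂ ∘ ρ⁻¹ ∈ K∞` one has `ρ(v_{kM+j}) ≤ λ^k·σ(ρ(v_0))` and
`Σ_{i=0}^{N-1} ρ(v_i) ≤ (M/(1-λ))·σ(ρ(v_0))`. -/
theorem rescaled_decay_transfer
    (M : ℕ) (hM : 1 ≤ M)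
    (ρ κhat : ℝ≥0 → ℝ≥0) (hρ : ClassKInf ρ) (hκhat : ClassKInf κhat)
    (ρinv : ℝ≥0 → ℝ≥0)
    (hinvl : Function.LeftInverse ρinv ρ) (hinvr : Function.RightInverse ρinv ρ)
    (lam : ℝ≥0) (hlam0 : 0 < lam) (hlam1 : lam < 1)
    (v : ℕ → ℝ≥0)
    (hdecay : ∀ k : ℕ, ρ (κhat (v (k * M))) ≤ lam ^ k * ρ (κhat (v 0)))
    (htransient : ∀ k j : ℕ, j < M → v (k * M + j) ≤ κhat (v (k * M))) :
    ClassKInf (fun r => ρ (κhat (ρinv r))) ∧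
    (∀ k j : ℕ, j < M →
      ρ (v (k * M + j)) ≤ lam ^ k * ρ (κhat (ρinv (ρ (v 0))))) ∧
    (∀ N : ℕ, 1 ≤ N →
      ∑ i ∈ Finset.range N, ρ (v i) ≤
        ((M : ℝ≥0) / (1 - lam)) * ρ (κhat (ρinv (ρ (v 0))))) := by
  have sigma_classKInf : ClassKInf (ρ ∘ κhat ∘ ρinv) :=
    hρ.comp (hκhat.comp (classKInf_of_rightInverse hρ.strictMono hinvr))
  have pointwise_decay (k j : ℕ) (hj : j < M) :
      ρ (v (k * M + j)) ≤ lam ^ k * ρ (κhat (ρinv (ρ (v 0)))) :=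
    calc
      ρ (v (k * M + j)) ≤ ρ (κhat (v (k * M))) := hρ.strictMono.monotone (htransient k j hj)
      _ ≤ lam ^ k * ρ (κhat (v 0)) := hdecay k
      _ = lam ^ k * ρ (κhat (ρinv (ρ (v 0)))) := by rw [hinvl (v 0)]
  exact ⟨sigma_classKInf, pointwise_decay,
    fun N _ ↦ sum_range_le_of_geometric_blocks hM hlam1 pointwise_decay N⟩
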